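/- Let t ↦ W(t) be a gradient flow of the empirical risk of a deep linear network and suppose max_{1≤k≤L} ‖W_k(t)‖_F → ∞ as t → ∞. Then, for any choice of top singular vector pair (u_1(t), v_1(t)) of W_1(t), |⟨ w_prod(t) / ∏_{k=1}^L ‖W_k(t)‖_F , v_1(t) ⟩| → 1 as t → ∞. -/

import Mathlib

/-! Along the flow the matrices `W_k W_kᵀ − W_{k+1}ᵀ W_{k+1}` are constant (`conserved`): the two
terms have the same derivative, because `∇_k R · W_kᵀ = W_{k+1}ᵀ · ∇_{k+1} R`. Taking traces, the
squared Frobenius norms of the layers differ by constants, so if the largest of them tends to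
infinity, they all do (`tendsto_frobNorm`). Divide every layer by its Frobenius norm. The
normalized layers stay in a compact set, and their balance defect
`A_k A_kᵀ − A_{k+1}ᵀ A_{k+1}` tends to zero (`normalized_defect`). It therefore suffices to treat
limits `B` of the normalized network along ultrafilters finer than `atTop`; these have unit-norm
layers and are exactly balanced, and the limit `v` of `v_1` still maximizes `‖B_0 w‖` among unit
vectors `w`.

For such a limit (`balanced_alignment`), let `P = B_{L-1} ⋯ B_0` and let `p` be its only row.
Balancedness folds `P Pᵀ` into `(B_{L-1} B_{L-1}ᵀ)^L`, which is `1` since `B_{L-1}` is a unit row;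
so `‖p‖ = 1`. As every layer is a contraction,
`1 = |P p| ≤ ‖B_0 p‖ ≤ ‖B_0 v‖ ≤ 1`, whence `B_0ᵀ B_0 v = v`. Balancedness propagates this upwards:
`B_jᵀ B_j` fixes `B_{j-1} ⋯ B_0 v` for each `j`, so these vectors all have norm one, and the last
of them is `⟨p, v⟩`.
-/

open Matrix Filter
open scoped BigOperators

noncomputable section

/-- Euclidean norm of a vector in `ℝ^m`. -/
def vecNorm {m : Type*} [Fintype m] (v : m → ℝ) : ℝ :=
  Real.sqrt (∑ i, (v i) ^ 2)

/-- Frobenius norm of a real matrix. -/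
def frobNorm {m n : Type*} [Fintype m] [Fintype n] (M : Matrix m n ℝ) : ℝ :=
  Real.sqrt (∑ i, ∑ j, (M i j) ^ 2)

/-- Spectral norm (operator 2-norm) of a real matrix. -/
def specNorm {m n : Type*} [Fintype m] [Fintype n] (M : Matrix m n ℝ) : ℝ :=
  sSup {c : ℝ | ∃ v : n → ℝ, vecNorm v = 1 ∧ c = vecNorm (M.mulVec v)}

/-- `(u, v)` is a top singular vector pair of `M`: both are unit vectors,
`M v = ‖M‖₂ u` and `Mᵀ u = ‖M‖₂ v`. -/
def IsTopSingularPair {m n : Type*} [Fintype m] [Fintype n]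
    (M : Matrix m n ℝ) (u : m → ℝ) (v : n → ℝ) : Prop :=
  vecNorm u = 1 ∧ vecNorm v = 1 ∧
    M.mulVec v = specNorm M • u ∧ Mᵀ.mulVec u = specNorm M • v

/-- Parameters of a deep linear network: layer `k` (0-indexed; paper layer `k+1`)
is a matrix mapping `ℝ^{dim k}` to `ℝ^{dim (k+1)}`. -/
abbrev Layers (dim : ℕ → ℕ) := ∀ j : ℕ, Matrix (Fin (dim (j+1))) (Fin (dim j)) ℝ

/-- Product `W_{j-1} ⋯ W_0` of the bottom `j` layers (paper: `W_j ⋯ W_1`). -/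
def prodUpTo {dim : ℕ → ℕ} (W : Layers dim) : ∀ j : ℕ, Matrix (Fin (dim j)) (Fin (dim 0)) ℝ
  | 0 => 1
  | (j+1) => W j * prodUpTo W j

/-- Product `W_{L-1} ⋯ W_j` of the layers from `j` up to the top layer `L-1`
(paper: `W_L ⋯ W_{j+1}`); for `j ≥ L` it is a pseudo-identity. -/
def prodFrom {dim : ℕ → ℕ} (L : ℕ) (W : Layers dim) (j : ℕ) :
    Matrix (Fin (dim L)) (Fin (dim j)) ℝ :=
  if h : j < L then prodFrom L W (j+1) * W j
  else Matrix.of fun i j' => if (i : ℕ) = (j' : ℕ) then 1 else 0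
  termination_by L - j
  decreasing_by omega

/-- The linear predictor `w_prod = (W_L ⋯ W_1)ᵀ ∈ ℝ^d` induced by the network
(recall `dim L = 1`). -/
def wprod {dim : ℕ → ℕ} (L : ℕ) (W : Layers dim) : Fin (dim 0) → ℝ :=
  fun j => ∑ a, prodUpTo W L a j

/-- Empirical risk of a linear predictor `w`: `R(w) = (1/n) ∑ᵢ ℓ(⟨w, zᵢ⟩)`. -/
def riskV {n d : ℕ} (ℓ : ℝ → ℝ) (z : Fin n → Fin d → ℝ) (w : Fin d → ℝ) : ℝ :=
  (n : ℝ)⁻¹ * ∑ i, ℓ (w ⬝ᵥ z i)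

/-- Gradient of the risk w.r.t. the linear predictor: `∇R(w) = (1/n) ∑ᵢ ℓ'(⟨w, zᵢ⟩) zᵢ`. -/
def gradRiskV {n d : ℕ} (ℓ' : ℝ → ℝ) (z : Fin n → Fin d → ℝ) (w : Fin d → ℝ) :
    Fin d → ℝ :=
  (n : ℝ)⁻¹ • ∑ i, ℓ' (w ⬝ᵥ z i) • z i

/-- The partial gradient of the empirical risk with respect to layer `k`:
`∂R/∂W_k = (W_L ⋯ W_{k+1})ᵀ ∇R(w_prod)ᵀ (W_{k-1} ⋯ W_1)ᵀ`. -/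
def gradLayer {dim : ℕ → ℕ} (L : ℕ) (ℓ' : ℝ → ℝ) {n : ℕ}
    (z : Fin n → Fin (dim 0) → ℝ) (W : Layers dim) (k : ℕ) :
    Matrix (Fin (dim (k+1))) (Fin (dim k)) ℝ :=
  (prodFrom L W (k+1))ᵀ *
    (Matrix.of fun (_ : Fin (dim L)) (j : Fin (dim 0)) => gradRiskV ℓ' z (wprod L W) j) *
    (prodUpTo W k)ᵀ

/-- Empirical risk of the network. -/
def riskW {dim : ℕ → ℕ} (L : ℕ) (ℓ : ℝ → ℝ) {n : ℕ}
    (z : Fin n → Fin (dim 0) → ℝ) (W : Layers dim) : ℝ :=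
  riskV ℓ z (wprod L W)

/-- Gradient flow: `dW(t)/dt = −∇R(W(t))` for all `t ≥ 0`, entrywise on each layer. -/
def IsGradientFlow {dim : ℕ → ℕ} (L : ℕ) (ℓ' : ℝ → ℝ) {n : ℕ}
    (z : Fin n → Fin (dim 0) → ℝ) (W : ℝ → Layers dim) : Prop :=
  ∀ t : ℝ, 0 ≤ t → ∀ k < L, ∀ i j,
    HasDerivAt (fun s => W s k i j) (-(gradLayer L ℓ' z (W t) k i j)) t

/-- The initialization-dependent constant `D`. -/
def Dconst {dim : ℕ → ℕ} (L : ℕ) (W0 : Layers dim) : ℝ :=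
  (⨆ k : Fin L, frobNorm (W0 k) ^ 2) - frobNorm (W0 (L-1)) ^ 2
    + ∑ k ∈ Finset.range (L-1),
        specNorm (W0 k * (W0 k)ᵀ - (W0 (k+1))ᵀ * W0 (k+1))

/-- Euclidean norm of a parameter tuple (all entries of the first `L` layers concatenated). -/
def paramNorm {dim : ℕ → ℕ} (L : ℕ) (V : Layers dim) : ℝ :=
  Real.sqrt (∑ k ∈ Finset.range L, frobNorm (V k) ^ 2)

/-- Squared Euclidean norm of the full gradient `∇R(W)`. -/
def gradNormSq {dim : ℕ → ℕ} (L : ℕ) (ℓ' : ℝ → ℝ) {n : ℕ}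
    (z : Fin n → Fin (dim 0) → ℝ) (W : Layers dim) : ℝ :=
  ∑ k ∈ Finset.range L, frobNorm (gradLayer L ℓ' z W k) ^ 2

/-- The data-dependent constant `α = min_{‖ξ‖=1, ξ ⟂ ū} max_{i ∈ S} ⟨ξ, zᵢ⟩`,
where `S` is the set of support vectors. -/
def alphaConst {n d : ℕ} (z : Fin n → Fin d → ℝ) (ubar : Fin d → ℝ) (γ : ℝ) : ℝ :=
  sInf {c : ℝ | ∃ ξ : Fin d → ℝ, vecNorm ξ = 1 ∧ ξ ⬝ᵥ ubar = 0 ∧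
    c = sSup {r : ℝ | ∃ i : Fin n, ubar ⬝ᵥ z i = γ ∧ r = ξ ⬝ᵥ z i}}

/-- Orthogonal projection onto the orthogonal complement of `span(ū)` (for `ū` a unit vector). -/
def projPerp {d : ℕ} (ubar : Fin d → ℝ) (w : Fin d → ℝ) : Fin d → ℝ :=
  w - (w ⬝ᵥ ubar) • ubar

open Topology

/-! ### Frobenius and spectral norms -/

lemma vecNorm_sq {m : Type*} [Fintype m] (v : m → ℝ) : vecNorm v ^ 2 = v ⬝ᵥ v := by
  rw [vecNorm, Real.sq_sqrt (Finset.sum_nonneg fun i _ => sq_nonneg _)]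
  simp [dotProduct, sq]

lemma frobNorm_sq {m n : Type*} [Fintype m] [Fintype n] (M : Matrix m n ℝ) :
    frobNorm M ^ 2 = ∑ i, ∑ j, (M i j) ^ 2 := by
  rw [frobNorm, Real.sq_sqrt]
  positivity

lemma frobNorm_nonneg {m n : Type*} [Fintype m] [Fintype n] (M : Matrix m n ℝ) :
    0 ≤ frobNorm M := Real.sqrt_nonneg _

lemma trace_mul_transpose_eq {m n : Type*} [Fintype m] [Fintype n] (M : Matrix m n ℝ) :
    (M * Mᵀ).trace = frobNorm M ^ 2 := by
  rw [frobNorm_sq]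
  simp [Matrix.trace, Matrix.mul_apply, sq]

lemma trace_transpose_mul_eq {m n : Type*} [Fintype m] [Fintype n] (M : Matrix m n ℝ) :
    (Mᵀ * M).trace = frobNorm M ^ 2 := by
  rw [Matrix.trace_mul_comm, trace_mul_transpose_eq]

lemma frobNorm_transpose {m n : Type*} [Fintype m] [Fintype n] (M : Matrix m n ℝ) :
    frobNorm Mᵀ = frobNorm M := by
  unfold frobNorm
  rw [Finset.sum_comm]
  rfl

lemma mulVec_dot_le {m n : Type*} [Fintype m] [Fintype n] (M : Matrix m n ℝ) (w : n → ℝ) :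
    M *ᵥ w ⬝ᵥ M *ᵥ w ≤ frobNorm M ^ 2 * (w ⬝ᵥ w) := by
  rw [frobNorm_sq, Finset.sum_mul, dotProduct]
  refine Finset.sum_le_sum fun i _ => ?_
  have := Finset.sum_mul_sq_le_sq_mul_sq Finset.univ (M i) w
  simpa [Matrix.mulVec, dotProduct, sq] using this

lemma abs_entry_le_frobNorm {m n : Type*} [Fintype m] [Fintype n] (M : Matrix m n ℝ) (i : m)
    (j : n) : |M i j| ≤ frobNorm M := by
  refine abs_le_of_sq_le_sq ?_ (frobNorm_nonneg M)
  rw [frobNorm_sq]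
  calc (M i j) ^ 2 ≤ ∑ j, (M i j) ^ 2 :=
        Finset.single_le_sum (f := fun j => (M i j) ^ 2) (fun _ _ => sq_nonneg _)
          (Finset.mem_univ j)
    _ ≤ _ := Finset.single_le_sum (f := fun i => ∑ j, (M i j) ^ 2)
          (fun _ _ => Finset.sum_nonneg fun _ _ => sq_nonneg _) (Finset.mem_univ i)

lemma frobNorm_smul {m n : Type*} [Fintype m] [Fintype n] (c : ℝ) (M : Matrix m n ℝ) :
    frobNorm (c • M) ^ 2 = c ^ 2 * frobNorm M ^ 2 := by
  simp [frobNorm_sq, mul_pow, Finset.mul_sum]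

lemma frobNorm_normalize {m n : Type*} [Fintype m] [Fintype n] (M : Matrix m n ℝ)
    (h : 0 < frobNorm M) : frobNorm ((frobNorm M)⁻¹ • M) ^ 2 = 1 := by
  rw [frobNorm_smul, inv_pow, inv_mul_cancel₀ (pow_ne_zero 2 h.ne')]

lemma continuous_frobNorm {m n : Type*} [Fintype m] [Fintype n] :
    Continuous (frobNorm : Matrix m n ℝ → ℝ) := by
  unfold frobNorm
  fun_prop

lemma vecNorm_mulVec_le_specNorm {m n : Type*} [Fintype m] [Fintype n] (M : Matrix m n ℝ)
    (v : n → ℝ) (hv : vecNorm v = 1) : vecNorm (M *ᵥ v) ≤ specNorm M := by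
  refine le_csSup ⟨frobNorm M, ?_⟩ ⟨v, hv, rfl⟩
  rintro c ⟨w, hw, rfl⟩
  refine (pow_le_pow_iff_left₀ (Real.sqrt_nonneg _) (frobNorm_nonneg M) two_ne_zero).mp ?_
  change vecNorm _ ^ 2 ≤ _
  have := mulVec_dot_le M w
  rw [← vecNorm_sq, ← vecNorm_sq, hw] at this
  simpa using this

/-- A top right singular vector maximizes `‖M w‖² / ‖w‖²`. -/
lemma IsTopSingularPair.max {m n : Type*} [Fintype m] [Fintype n] {M : Matrix m n ℝ}
    {u : m → ℝ} {v : n → ℝ} (h : IsTopSingularPair M u v) (w : n → ℝ) :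
    M *ᵥ w ⬝ᵥ M *ᵥ w ≤ (M *ᵥ v ⬝ᵥ M *ᵥ v) * (w ⬝ᵥ w) := by
  obtain ⟨hu, hv, h1, -⟩ := h
  have hs : M *ᵥ v ⬝ᵥ M *ᵥ v = specNorm M ^ 2 := by
    rw [h1, smul_dotProduct, dotProduct_smul, ← vecNorm_sq, hu]
    simp [sq]
  rw [hs]
  by_cases hw : w = 0
  · simp [hw]
  have hpos : 0 < vecNorm w := by
    refine lt_of_le_of_ne (Real.sqrt_nonneg _) fun h0 => hw ?_
    have h2 := vecNorm_sq w
    rw [← h0] at h2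
    exact dotProduct_self_eq_zero.mp (by simpa using h2.symm)
  have hunit : vecNorm ((vecNorm w)⁻¹ • w) = 1 := by
    have : vecNorm ((vecNorm w)⁻¹ • w) ^ 2 = 1 := by
      rw [vecNorm_sq, smul_dotProduct, dotProduct_smul, ← vecNorm_sq]
      simp only [smul_eq_mul]
      field_simp
    exact (pow_eq_one_iff_of_nonneg (Real.sqrt_nonneg _) two_ne_zero).mp this
  have h3 := pow_le_pow_left₀ (Real.sqrt_nonneg _) (vecNorm_mulVec_le_specNorm M _ hunit) 2
  change vecNorm _ ^ 2 ≤ _ at h3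
  rw [vecNorm_sq, Matrix.mulVec_smul, smul_dotProduct, dotProduct_smul] at h3
  simp only [smul_eq_mul] at h3
  rw [← vecNorm_sq w]
  field_simp at h3
  linarith

/-! ### Exactly balanced networks -/

section Balanced

variable {dim : ℕ → ℕ} {L : ℕ} {B : Layers dim}

/-- Balancedness folds the Gram matrix of a product of layers into a power of the Gram matrix
of its last factor. -/
lemma prodUpTo_mul_transpose
    (hbal : ∀ k, k + 1 < L → B k * (B k)ᵀ = (B (k + 1))ᵀ * B (k + 1)) (j : ℕ) (hj : j < L) :
    prodUpTo B (j + 1) * (prodUpTo B (j + 1))ᵀ = (B j * (B j)ᵀ) ^ (j + 1) := by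
  induction j with
  | zero => simp [prodUpTo]
  | succ j ih =>
    have ih := ih (by omega)
    have comm : ∀ r : ℕ, B (j + 1) * ((B (j + 1))ᵀ * B (j + 1)) ^ r
        = (B (j + 1) * (B (j + 1))ᵀ) ^ r * B (j + 1) := by
      intro r
      induction r with
      | zero => simp
      | succ r ihr => rw [pow_succ, ← Matrix.mul_assoc, ihr, pow_succ]; simp only [Matrix.mul_assoc]
    calc prodUpTo B (j + 1 + 1) * (prodUpTo B (j + 1 + 1))ᵀ
        = B (j + 1) * (prodUpTo B (j + 1) * (prodUpTo B (j + 1))ᵀ) * (B (j + 1))ᵀ := by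
          rw [prodUpTo, Matrix.transpose_mul]; simp only [Matrix.mul_assoc]
      _ = _ := by
          rw [ih, hbal j hj, comm, pow_succ _ (j + 1), Matrix.mul_assoc]

/-- Layers of unit Frobenius norm are contractions, so those above the first cannot
increase the norm. -/
lemma prodUpTo_mulVec_le (h1 : ∀ k < L, frobNorm (B k) ^ 2 = 1) (w : Fin (dim 0) → ℝ) (j : ℕ)
    (hj : j < L) :
    prodUpTo B (j + 1) *ᵥ w ⬝ᵥ prodUpTo B (j + 1) *ᵥ w ≤ B 0 *ᵥ w ⬝ᵥ B 0 *ᵥ w := by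
  induction j with
  | zero => simp [prodUpTo]
  | succ j ih =>
    refine le_trans ?_ (ih (by omega))
    have := mulVec_dot_le (B (j + 1)) (prodUpTo B (j + 1) *ᵥ w)
    rw [h1 _ hj, one_mul] at this
    rw [prodUpTo, ← Matrix.mulVec_mulVec]
    exact this

/-- A unit vector fixed by `B₀ᵀ B₀` is carried isometrically through all the layers. -/
lemma prodUpTo_mulVec_eigen
    (hbal : ∀ k, k + 1 < L → B k * (B k)ᵀ = (B (k + 1))ᵀ * B (k + 1)) (v : Fin (dim 0) → ℝ)
    (hv : v ⬝ᵥ v = 1) (hfix : ((B 0)ᵀ * B 0) *ᵥ v = v) (j : ℕ) (hj : j < L) :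
    prodUpTo B (j + 1) *ᵥ v ⬝ᵥ prodUpTo B (j + 1) *ᵥ v = 1 := by
  have step : ∀ k, ∀ a : Fin (dim k) → ℝ, ((B k)ᵀ * B k) *ᵥ a = a →
      B k *ᵥ a ⬝ᵥ B k *ᵥ a = a ⬝ᵥ a := by
    intro k a ha
    have h : a ⬝ᵥ ((B k)ᵀ * B k) *ᵥ a = a ⬝ᵥ a := by rw [ha]
    rw [← h, ← Matrix.mulVec_mulVec, Matrix.dotProduct_mulVec a, Matrix.vecMul_transpose]
  have key : ∀ j < L, prodUpTo B j *ᵥ v ⬝ᵥ prodUpTo B j *ᵥ v = 1 ∧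
      ((B j)ᵀ * B j) *ᵥ (prodUpTo B j *ᵥ v) = prodUpTo B j *ᵥ v := by
    intro j hj
    induction j with
    | zero => simpa [prodUpTo, hv] using hfix
    | succ j ih =>
      obtain ⟨ih1, ih2⟩ := ih (by omega)
      constructor
      · rw [prodUpTo, ← Matrix.mulVec_mulVec, step _ _ ih2, ih1]
      · rw [← hbal j hj, prodUpTo]
        simp only [← Matrix.mulVec_mulVec] at ih2 ⊢
        rw [ih2]
  obtain ⟨k1, k2⟩ := key j hj
  rw [prodUpTo, ← Matrix.mulVec_mulVec, step _ _ k2, k1]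

/-- The full product has a single row, since `dim L = 1`. -/
lemma wprod_dot_sq (hdimL : dim L = 1) (w : Fin (dim 0) → ℝ) :
    (wprod L B ⬝ᵥ w) ^ 2 = prodUpTo B L *ᵥ w ⬝ᵥ prodUpTo B L *ᵥ w := by
  have : Unique (Fin (dim L)) := by rw [hdimL]; infer_instance
  simp [wprod, dotProduct, Matrix.mulVec, sq]

/-- The limiting statement: for a balanced network of unit-norm layers, the predictor is,
up to sign, the top right singular vector of the first layer. -/
lemma balanced_alignment (hL : 1 ≤ L) (hdimL : dim L = 1)
    (h1 : ∀ k < L, frobNorm (B k) ^ 2 = 1)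
    (hbal : ∀ k, k + 1 < L → B k * (B k)ᵀ = (B (k + 1))ᵀ * B (k + 1))
    (v : Fin (dim 0) → ℝ) (hv : v ⬝ᵥ v = 1)
    (hmax : ∀ w, B 0 *ᵥ w ⬝ᵥ B 0 *ᵥ w ≤ (B 0 *ᵥ v ⬝ᵥ B 0 *ᵥ v) * (w ⬝ᵥ w)) :
    |wprod L B ⬝ᵥ v| = 1 := by
  obtain ⟨N, rfl⟩ : ∃ N, L = N + 1 := ⟨L - 1, by omega⟩
  have hN : N < N + 1 := by omega
  have : Unique (Fin (dim (N + 1))) := by rw [hdimL]; infer_instance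
  have hone : B N * (B N)ᵀ = 1 := by
    have ht := trace_mul_transpose_eq (B N)
    rw [h1 N hN] at ht
    ext i j
    rw [Subsingleton.elim i default, Subsingleton.elim j default]
    simpa [Matrix.trace] using ht
  have hp : wprod (N + 1) B ⬝ᵥ wprod (N + 1) B = 1 := by
    have := prodUpTo_mul_transpose hbal N hN
    rw [hone, one_pow] at this
    have := congrFun (congrFun this default) default
    simpa [wprod, dotProduct, Matrix.mul_apply] using this
  -- `1 = ‖p‖⁴ = ‖P p‖² ≤ ‖B₀ p‖² ≤ ‖B₀ v‖² ≤ 1`, where `P` is the full product and `p` its row.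
  have hlow : 1 ≤ B 0 *ᵥ v ⬝ᵥ B 0 *ᵥ v := by
    have e1 := wprod_dot_sq (B := B) hdimL (wprod (N + 1) B)
    have e2 := prodUpTo_mulVec_le h1 (wprod (N + 1) B) N hN
    have e3 := hmax (wprod (N + 1) B)
    rw [hp] at e1 e3
    linarith
  have hfix : ((B 0)ᵀ * B 0) *ᵥ v = v := by
    have hup := mulVec_dot_le (B 0)ᵀ (B 0 *ᵥ v)
    have hup' := mulVec_dot_le (B 0) v
    rw [frobNorm_transpose, h1 0 (by omega), one_mul] at hup
    rw [h1 0 (by omega), one_mul, hv] at hup'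
    have hcross : (B 0)ᵀ *ᵥ (B 0 *ᵥ v) ⬝ᵥ v = B 0 *ᵥ v ⬝ᵥ B 0 *ᵥ v := by
      rw [Matrix.mulVec_transpose, ← Matrix.dotProduct_mulVec]
    rw [← Matrix.mulVec_mulVec, ← sub_eq_zero, ← dotProduct_self_eq_zero]
    refine le_antisymm ?_ (Finset.sum_nonneg fun i _ => mul_self_nonneg _)
    rw [sub_dotProduct, dotProduct_sub, dotProduct_sub, hv,
      dotProduct_comm v ((B 0)ᵀ *ᵥ (B 0 *ᵥ v)), hcross]
    linarith
  have := prodUpTo_mulVec_eigen hbal v hv hfix N hN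
  rw [← wprod_dot_sq hdimL, ← sq_abs] at this
  exact (pow_eq_one_iff_of_nonneg (abs_nonneg _) two_ne_zero).mp this

end Balanced

/-! ### Conservation law and growth -/

/-- Both sides equal `(W_{L-1} ⋯ W_{k+1})ᵀ ∇R(w_prod)ᵀ (W_k ⋯ W_0)ᵀ`. -/
lemma gradLayer_balance {dim : ℕ → ℕ} (L : ℕ) (ℓ' : ℝ → ℝ) {n : ℕ}
    (z : Fin n → Fin (dim 0) → ℝ) (W : Layers dim) (k : ℕ) (hk : k + 1 < L) :
    gradLayer L ℓ' z W k * (W k)ᵀ = (W (k + 1))ᵀ * gradLayer L ℓ' z W (k + 1) := by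
  have h : prodFrom L W (k + 1) = prodFrom L W (k + 1 + 1) * W (k + 1) := by
    rw [prodFrom, dif_pos hk]
  rw [gradLayer, gradLayer, h, prodUpTo]
  simp only [Matrix.transpose_mul, Matrix.mul_assoc]

/-- Gradient flow preserves `W_k W_kᵀ − W_{k+1}ᵀ W_{k+1}`. -/
lemma conserved {dim : ℕ → ℕ} {L : ℕ} {ℓ' : ℝ → ℝ} {n : ℕ}
    {z : Fin n → Fin (dim 0) → ℝ} {W : ℝ → Layers dim} (hflow : IsGradientFlow L ℓ' z W)
    (k : ℕ) (hk : k + 1 < L) (t : ℝ) (ht : 0 ≤ t) :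
    W t k * (W t k)ᵀ - (W t (k + 1))ᵀ * W t (k + 1)
      = W 0 k * (W 0 k)ᵀ - (W 0 (k + 1))ᵀ * W 0 (k + 1) := by
  ext i j
  set f : ℝ → ℝ := fun s => (W s k * (W s k)ᵀ - (W s (k + 1))ᵀ * W s (k + 1)) i j with hf
  have hder : ∀ s, 0 ≤ s → HasDerivAt f 0 s := by
    intro s hs
    have hb := gradLayer_balance L ℓ' z (W s) k hk
    have e1 := congrFun (congrFun hb i) j
    have e2 := congrFun (congrFun hb j) i
    have d1 : HasDerivAt (fun s => ∑ a, W s k i a * W s k j a) _ s :=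
      HasDerivAt.fun_sum fun a _ =>
        (hflow s hs k (by omega) i a).mul (hflow s hs k (by omega) j a)
    have d2 : HasDerivAt (fun s => ∑ a, W s (k + 1) a i * W s (k + 1) a j) _ s :=
      HasDerivAt.fun_sum fun a _ =>
        (hflow s hs (k + 1) hk a i).mul (hflow s hs (k + 1) hk a j)
    have d := d1.sub d2
    simp only [Matrix.mul_apply, Matrix.transpose_apply] at e1 e2
    refine d.congr_deriv ?_
    simp only [neg_mul, mul_neg, Finset.sum_add_distrib, Finset.sum_neg_distrib]
    simp only [mul_comm (W s k i _), mul_comm (gradLayer L ℓ' z (W s) (k + 1) _ i)]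
    linarith
  have hc : ContinuousOn f (Set.Icc 0 t) := fun s hs =>
    (hder s hs.1).continuousAt.continuousWithinAt
  exact constant_of_has_deriv_right_zero hc (fun s hs => (hder s hs.1).hasDerivWithinAt) t
    ⟨ht, le_rfl⟩

lemma frobNorm_sq_sub_const {dim : ℕ → ℕ} {L : ℕ} {ℓ' : ℝ → ℝ} {n : ℕ}
    {z : Fin n → Fin (dim 0) → ℝ} {W : ℝ → Layers dim} (hflow : IsGradientFlow L ℓ' z W)
    (k : ℕ) (hk : k < L) :
    ∃ c : ℝ, ∀ t, 0 ≤ t → frobNorm (W t k) ^ 2 = frobNorm (W t 0) ^ 2 + c := by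
  induction k with
  | zero => exact ⟨0, by simp⟩
  | succ k ih =>
    obtain ⟨c, hc⟩ := ih (by omega)
    refine ⟨c - (W 0 k * (W 0 k)ᵀ - (W 0 (k + 1))ᵀ * W 0 (k + 1)).trace, fun t ht => ?_⟩
    rw [← conserved hflow k hk t ht, Matrix.trace_sub, trace_mul_transpose_eq,
      trace_transpose_mul_eq, hc t ht]
    ring

lemma tendsto_frobNorm {dim : ℕ → ℕ} {L : ℕ} {ℓ' : ℝ → ℝ} {n : ℕ} (hL : 1 ≤ L)
    {z : Fin n → Fin (dim 0) → ℝ} {W : ℝ → Layers dim} (hflow : IsGradientFlow L ℓ' z W)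
    (hgrow : Tendsto (fun t : ℝ => ⨆ k : Fin L, frobNorm (W t k)) atTop atTop)
    (k : ℕ) (hk : k < L) : Tendsto (fun t => frobNorm (W t k)) atTop atTop := by
  have hne : Nonempty (Fin L) := ⟨⟨0, by omega⟩⟩
  choose c hc using fun k : Fin L => frobNorm_sq_sub_const hflow k k.2
  have hsq : Tendsto (fun t => frobNorm (W t k) ^ 2) atTop atTop := by
    have h2 : Tendsto (fun t : ℝ => (⨆ k : Fin L, frobNorm (W t k)) ^ 2
        + (c ⟨k, hk⟩ - ∑ j, |c j|)) atTop atTop :=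
      tendsto_atTop_add_const_right _ _ ((tendsto_pow_atTop two_ne_zero).comp hgrow)
    refine tendsto_atTop_mono' _ ?_ h2
    filter_upwards [eventually_ge_atTop 0] with t ht
    obtain ⟨j, hj⟩ := exists_eq_ciSup_of_finite (f := fun k : Fin L => frobNorm (W t k))
    have e1 := hc j t ht
    have e2 := hc ⟨k, hk⟩ t ht
    have e3 : |c j| ≤ ∑ j, |c j| :=
      Finset.single_le_sum (f := fun j => |c j|) (fun _ _ => abs_nonneg _) (Finset.mem_univ j)
    have e4 := le_abs_self (c j)
    rw [← hj, e1, e2]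
    linarith
  have := Real.tendsto_sqrt_atTop.comp hsq
  refine this.congr fun t => ?_
  simp [Real.sqrt_sq (frobNorm_nonneg _)]

/-! ### Normalized layers and passage to the limit -/

/-- The network whose layers are those of `W`, each divided by its Frobenius norm
(a zero layer stays zero). -/
def normalized {dim : ℕ → ℕ} (W : Layers dim) : Layers dim :=
  fun k => (frobNorm (W k))⁻¹ • W k

lemma prodUpTo_normalized {dim : ℕ → ℕ} (W : Layers dim) (j : ℕ) :
    prodUpTo (normalized W) j = (∏ k ∈ Finset.range j, frobNorm (W k))⁻¹ • prodUpTo W j := by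
  induction j with
  | zero => simp [prodUpTo]
  | succ j ih =>
    rw [prodUpTo, ih, prodUpTo, Finset.prod_range_succ, normalized, Matrix.smul_mul,
      Matrix.mul_smul, smul_smul, mul_inv, mul_comm]

lemma wprod_normalized {dim : ℕ → ℕ} (L : ℕ) (W : Layers dim) :
    wprod L (normalized W) = (∏ k ∈ Finset.range L, frobNorm (W k))⁻¹ • wprod L W := by
  ext j
  simp [wprod, prodUpTo_normalized, Finset.mul_sum]

lemma abs_normalized_le {dim : ℕ → ℕ} (W : Layers dim) (k : ℕ) (i j) :
    |normalized W k i j| ≤ 1 := by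
  simp only [normalized, Matrix.smul_apply, smul_eq_mul, abs_mul, abs_inv,
    abs_of_nonneg (frobNorm_nonneg (W k))]
  exact inv_mul_le_one_of_le₀ (abs_entry_le_frobNorm _ i j) (frobNorm_nonneg _)

lemma continuous_prodUpTo {dim : ℕ → ℕ} (j : ℕ) :
    Continuous fun W : Layers dim => prodUpTo W j := by
  induction j with
  | zero => exact continuous_const
  | succ j ih => exact (continuous_apply j).matrix_mul ih

lemma continuous_wprod {dim : ℕ → ℕ} (L : ℕ) :
    Continuous fun W : Layers dim => wprod L W := by
  refine continuous_pi fun j => continuous_finsetSum _ fun a _ => ?_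
  exact (continuous_prodUpTo L).matrix_elem a j

/-- The balance defect of the normalized layers, in terms of the defect of `W`. -/
lemma normalized_defect {dim : ℕ → ℕ} (W : Layers dim) (k : ℕ) (h0 : 0 < frobNorm (W k))
    (h1 : 0 < frobNorm (W (k + 1))) :
    normalized W k * (normalized W k)ᵀ - (normalized W (k + 1))ᵀ * normalized W (k + 1) =
      (frobNorm (W k) ^ 2)⁻¹ • ((W k * (W k)ᵀ - (W (k + 1))ᵀ * W (k + 1))
        - (W k * (W k)ᵀ - (W (k + 1))ᵀ * W (k + 1)).trace •
          ((normalized W (k + 1))ᵀ * normalized W (k + 1))) := by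
  rw [Matrix.trace_sub, trace_mul_transpose_eq, trace_transpose_mul_eq]
  simp only [normalized, Matrix.transpose_smul, Matrix.smul_mul, Matrix.mul_smul]
  ext i j
  simp only [Matrix.sub_apply, Matrix.smul_apply, smul_eq_mul]
  field_simp
  ring

theorem stmt4
    (dim : ℕ → ℕ) (L n : ℕ) (hL : 1 ≤ L) (hdimL : dim L = 1) (hn : 0 < n)
    (x : Fin n → Fin (dim 0) → ℝ) (y : Fin n → ℝ) (z : Fin n → Fin (dim 0) → ℝ)
    (hx : ∀ i, vecNorm (x i) ≤ 1) (hy : ∀ i, y i = 1 ∨ y i = -1)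
    (hz : ∀ i, z i = y i • x i)
    (ℓ ℓ' : ℝ → ℝ) (hderiv : ∀ s : ℝ, HasDerivAt ℓ (ℓ' s) s) (hcont : Continuous ℓ')
    (W : ℝ → Layers dim) (hflow : IsGradientFlow L ℓ' z W)
    (hgrow : Tendsto (fun t : ℝ => ⨆ k : Fin L, frobNorm (W t k)) atTop atTop)
    (u1 : ℝ → Fin (dim 1) → ℝ) (v1 : ℝ → Fin (dim 0) → ℝ)
    (hsv : ∀ t : ℝ, 0 ≤ t → IsTopSingularPair (W t 0) (u1 t) (v1 t)) :
    Tendsto (fun t : ℝ =>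
        |wprod L (W t) ⬝ᵥ v1 t / ∏ k ∈ Finset.range L, frobNorm (W t k)|)
      atTop (nhds 1) := by
  have hinf := tendsto_frobNorm hL hflow hgrow
  -- Rewrite the target through the normalized network.
  have hfun : ∀ t, wprod L (W t) ⬝ᵥ v1 t / ∏ k ∈ Finset.range L, frobNorm (W t k)
      = wprod L (normalized (W t)) ⬝ᵥ v1 t := fun t => by
    rw [wprod_normalized, smul_dotProduct, smul_eq_mul, div_eq_inv_mul]
  simp only [hfun]
  rw [tendsto_iff_ultrafilter]
  intro g hg
  have hg0 : ∀ᶠ t in (g : Filter ℝ), 0 ≤ t := hg (eventually_ge_atTop 0)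
  have hpos : ∀ k < L, ∀ᶠ t in (g : Filter ℝ), 0 < frobNorm (W t k) := fun k hk =>
    hg ((hinf k hk).eventually_gt_atTop 0)
  -- By compactness the normalized layers and `v1` converge along `g`.
  obtain ⟨B, hB⟩ : ∃ B : Layers dim, Tendsto (fun t => normalized (W t)) g (𝓝 B) := by
    have hK : IsCompact (Set.univ.pi fun k => Set.univ.pi fun i => Set.univ.pi fun j =>
        Set.Icc (-1 : ℝ) 1 : Set (Layers dim)) :=
      isCompact_univ_pi fun k => isCompact_univ_pi fun i => isCompact_univ_pi fun j =>
        isCompact_Icc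
    obtain ⟨B, -, hB⟩ := hK.ultrafilter_le_nhds (g.map fun t => normalized (W t)) (by
      rw [Filter.le_principal_iff, Ultrafilter.mem_coe, Ultrafilter.mem_map]
      exact Filter.univ_mem' fun t k _ i _ j _ =>
        abs_le.mp (abs_normalized_le (W t) k i j))
    exact ⟨B, hB⟩
  obtain ⟨v, hv⟩ : ∃ v : Fin (dim 0) → ℝ, Tendsto v1 g (𝓝 v) := by
    have hK : IsCompact (Set.univ.pi fun j => Set.Icc (-1 : ℝ) 1 : Set (Fin (dim 0) → ℝ)) :=
      isCompact_univ_pi fun j => isCompact_Icc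
    obtain ⟨v, -, hv⟩ := hK.ultrafilter_le_nhds (g.map v1) (by
      rw [Filter.le_principal_iff, Ultrafilter.coe_map, Filter.mem_map]
      filter_upwards [hg0] with t ht j _
      refine abs_le.mp (abs_le_of_sq_le_sq ?_ zero_le_one)
      have h1 : ∑ j, v1 t j ^ 2 = 1 := Real.sqrt_eq_one.mp (hsv t ht).2.1
      rw [one_pow, ← h1]
      exact Finset.single_le_sum (f := fun j => v1 t j ^ 2) (fun _ _ => sq_nonneg _)
        (Finset.mem_univ j))
    exact ⟨v, hv⟩
  have hBk : ∀ k, Tendsto (fun t => normalized (W t) k) g (𝓝 (B k)) := fun k =>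
    tendsto_pi_nhds.mp hB k
  have hlim : |wprod L B ⬝ᵥ v| = 1 := by
    refine balanced_alignment hL hdimL (fun k hk => ?_) (fun k hk => ?_) v ?_ (fun w => ?_)
    · refine tendsto_nhds_unique
        (((continuous_frobNorm.tendsto _).comp (hBk k)).pow 2) ?_
      refine tendsto_const_nhds.congr' ?_
      filter_upwards [hpos k hk] with t ht
      exact (frobNorm_normalize _ ht).symm
    · have hc : Continuous fun A : Layers dim => (A (k + 1))ᵀ * A (k + 1) := by fun_prop
      have hc' : Continuous fun A : Layers dim => A k * (A k)ᵀ - (A (k + 1))ᵀ * A (k + 1) := by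
        fun_prop
      set C := W 0 k * (W 0 k)ᵀ - (W 0 (k + 1))ᵀ * W 0 (k + 1) with hC
      have hz0 : Tendsto (fun t => (frobNorm (W t k) ^ 2)⁻¹) g (𝓝 0) :=
        ((tendsto_inv_atTop_zero.comp ((tendsto_pow_atTop two_ne_zero).comp
          (hinf k (by omega)))).mono_left hg)
      have hdef : Tendsto (fun t => (frobNorm (W t k) ^ 2)⁻¹ • (C - C.trace •
          ((normalized (W t) (k + 1))ᵀ * normalized (W t) (k + 1)))) g
          (𝓝 ((0 : ℝ) • (C - C.trace • ((B (k + 1))ᵀ * B (k + 1))))) :=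
        hz0.smul (tendsto_const_nhds.sub
          (((hc.tendsto B).comp hB).const_smul C.trace))
      rw [zero_smul] at hdef
      rw [← sub_eq_zero]
      refine tendsto_nhds_unique ((hc'.tendsto B).comp hB) (hdef.congr' ?_)
      filter_upwards [hg0, hpos k (by omega), hpos (k + 1) hk] with t ht h0 h1
      rw [hC, ← conserved hflow k hk t ht]
      exact (normalized_defect (W t) k h0 h1).symm
    · have hc : Continuous fun v : Fin (dim 0) → ℝ => v ⬝ᵥ v := by fun_prop
      refine tendsto_nhds_unique ((hc.tendsto v).comp hv) ?_
      refine tendsto_const_nhds.congr' ?_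
      filter_upwards [hg0] with t ht
      simp only [Function.comp, ← vecNorm_sq, (hsv t ht).2.1, one_pow]
    · have hc1 : Continuous fun A : Layers dim => A 0 *ᵥ w ⬝ᵥ A 0 *ᵥ w := by fun_prop
      have hc2 : Continuous fun q : Layers dim × (Fin (dim 0) → ℝ) =>
          (q.1 0 *ᵥ q.2 ⬝ᵥ q.1 0 *ᵥ q.2) * (w ⬝ᵥ w) := by fun_prop
      refine le_of_tendsto_of_tendsto ((hc1.tendsto B).comp hB)
        ((hc2.tendsto (B, v)).comp (hB.prodMk_nhds hv)) ?_
      filter_upwards [hg0] with t ht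
      have := (hsv t ht).max w
      simp only [Function.comp, normalized, Matrix.smul_mulVec, smul_dotProduct,
        dotProduct_smul, smul_eq_mul]
      have hi := inv_nonneg.mpr (frobNorm_nonneg (W t 0))
      calc _ ≤ (frobNorm (W t 0))⁻¹ * ((frobNorm (W t 0))⁻¹ *
            ((W t 0 *ᵥ v1 t ⬝ᵥ W t 0 *ᵥ v1 t) * (w ⬝ᵥ w))) := by gcongr
        _ = _ := by ring
  have hc : Continuous fun q : Layers dim × (Fin (dim 0) → ℝ) => |wprod L q.1 ⬝ᵥ q.2| := by
    have := continuous_wprod (dim := dim) L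
    fun_prop
  have := (hc.tendsto (B, v)).comp (hB.prodMk_nhds hv)
  simp only [hlim] at this
  exact this

end
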